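/- Let E_k be minimizers for J_{B₁} with χ_{E_k} → χ_E in L^1_loc. Then for every ε > 0 there exists K such that for all k ≥ K, every point of ∂E_k ∩ B_{1/2} is within distance ε of ∂E. -/

import Mathlib

open MeasureTheory Metric Filter Set

/-- Interaction energy `L(A,B)`. -/
noncomputable def interactionL (n : ℕ) (s : ℝ)
    (A B : Set (EuclideanSpace ℝ (Fin n))) : ENNReal :=
  ∫⁻ x in A, ∫⁻ y in B, ENNReal.ofReal (1 / ‖x - y‖ ^ ((n : ℝ) + s))

/-- `J_Ω(E) = L(E ∩ Ω, C E) + L(E \ Ω, C E ∩ Ω)`. -/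
noncomputable def Jfun (n : ℕ) (s : ℝ) (Ω E : Set (EuclideanSpace ℝ (Fin n))) : ENNReal :=
  interactionL n s (E ∩ Ω) Eᶜ + interactionL n s (E \ Ω) (Eᶜ ∩ Ω)

/-- `E` is a minimizer of `J` in the unit ball. -/
def IsMinimizerB1 (n : ℕ) (s : ℝ) (E : Set (EuclideanSpace ℝ (Fin n))) : Prop :=
  MeasurableSet E ∧ ∀ F : Set (EuclideanSpace ℝ (Fin n)), MeasurableSet F →
    F \ ball (0 : EuclideanSpace ℝ (Fin n)) 1 = E \ ball (0 : EuclideanSpace ℝ (Fin n)) 1 →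
    Jfun n s (ball (0 : EuclideanSpace ℝ (Fin n)) 1) E ≤
      Jfun n s (ball (0 : EuclideanSpace ℝ (Fin n)) 1) F

/-- Measure-theoretic boundary (topological boundary after normalization). -/
def mtBoundary (n : ℕ) (E : Set (EuclideanSpace ℝ (Fin n))) : Set (EuclideanSpace ℝ (Fin n)) :=
  {x | ∀ ρ : ℝ, 0 < ρ → 0 < volume (ball x ρ ∩ E) ∧ 0 < volume (ball x ρ \ E)}

/-- `χ_{A_k} → χ_A` in `L¹_loc`. -/
def L1locIndicatorTendsto (n : ℕ) (A : ℕ → Set (EuclideanSpace ℝ (Fin n)))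
    (Alim : Set (EuclideanSpace ℝ (Fin n))) : Prop :=
  ∀ K : Set (EuclideanSpace ℝ (Fin n)), IsCompact K →
    Tendsto (fun k => ∫ x in K,
      |Set.indicator (A k) (fun _ => (1:ℝ)) x - Set.indicator Alim (fun _ => (1:ℝ)) x|)
      atTop (nhds 0)

/-!
Removing `A = E ∩ B_ρ(x)` from a minimizer `E` is admissible, so the interaction of `A` with its
complement is at most twice its interaction with `E \ A`, hence with the complement of `B_ρ(x)`.
The fractional isoperimetric inequality bounds the former from below by `|A| ^ (1 - s/n)`, while
averaging the latter over `ρ ∈ (r, R)` costs only `R ^ (1 - s) |E ∩ B_R(x)|`, because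
`t ^ (-s)` is integrable at `0`. With `V(ρ) = |E ∩ B_ρ(x)|` this reads
`V(r) ^ (1 - s/n) (R - r) ≲ R ^ (1 - s) V(R)`, and De Giorgi's iteration turns it into the density
estimate `V(r) ≳ r ^ n` at points of the support of `E`; the complement of `E` is a minimizer too.
If `x ∈ ∂E_k` and `E_k` is closer to `E` in `L¹` than the mass provided by the density estimate,
then both `E` and its complement have positive measure in `B_ε(x)`, and a connected set meeting the
supports of both meets `∂E`.
-/

open Module (finrank)

section Interaction

variable {X : Type*} [MeasurableSpace X] {μ : Measure X} {k : X → X → ENNReal}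
  {A A' B B' E Ω : Set X}

/-- The interaction energy of two sets for an arbitrary pair kernel; `interactionL n s` is the case
of the fractional kernel and Lebesgue measure. -/
noncomputable def interaction (μ : Measure X) (k : X → X → ENNReal) (A B : Set X) : ENNReal :=
  ∫⁻ x in A, ∫⁻ y in B, k x y ∂μ ∂μ

/-- The nonlocal perimeter of `E` in `Ω` for an arbitrary pair kernel, generalizing `Jfun`. -/
noncomputable def nonlocalPerimeter (μ : Measure X) (k : X → X → ENNReal) (Ω E : Set X) :
    ENNReal :=
  interaction μ k (E ∩ Ω) Eᶜ + interaction μ k (E \ Ω) (Eᶜ ∩ Ω)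

/-- Measurable symmetric pair kernels, the ones for which the order of the two sets in an
interaction is irrelevant. -/
structure IsSymmKernel (k : X → X → ENNReal) : Prop where
  measurable_uncurry : Measurable (Function.uncurry k)
  symm : ∀ x y, k x y = k y x

/-- Minimizers of the nonlocal perimeter in `Ω` among measurable sets with the same exterior
datum. -/
structure IsNonlocalMinimizer (μ : Measure X) (k : X → X → ENNReal) (Ω E : Set X) : Prop where
  measurableSet : MeasurableSet E
  perimeter_le : ∀ F, MeasurableSet F → F \ Ω = E \ Ω →
    nonlocalPerimeter μ k Ω E ≤ nonlocalPerimeter μ k Ω F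

lemma interaction_mono (hA : A ⊆ A') (hB : B ⊆ B') :
    interaction μ k A B ≤ interaction μ k A' B' :=
  (lintegral_mono_set hA).trans <| lintegral_mono fun _ => lintegral_mono_set hB

lemma interaction_union_left (hA' : MeasurableSet A') (hd : Disjoint A A') :
    interaction μ k (A ∪ A') B = interaction μ k A B + interaction μ k A' B :=
  lintegral_union hA' hd

lemma nonlocalPerimeter_eq_add (hA : MeasurableSet A) (hAE : A ⊆ E) (hAΩ : A ⊆ Ω) :
    nonlocalPerimeter μ k Ω E =
      (interaction μ k ((E \ A) ∩ Ω) Eᶜ + interaction μ k (E \ Ω) (Eᶜ ∩ Ω)) +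
        interaction μ k A Eᶜ := by
  have hsplit : E ∩ Ω = (E \ A) ∩ Ω ∪ A := by grind
  have hd : Disjoint ((E \ A) ∩ Ω) A := disjoint_sdiff_left.mono_left inter_subset_left
  rw [nonlocalPerimeter, hsplit, interaction_union_left hA hd]
  ring

variable [SFinite μ]

lemma interaction_comm (hk : IsSymmKernel k) (A B : Set X) :
    interaction μ k A B = interaction μ k B A := by
  simp only [interaction]
  rw [lintegral_lintegral_swap hk.measurable_uncurry.aemeasurable]
  simp only [hk.symm]

lemma interaction_union_right (hk : IsSymmKernel k) (hB' : MeasurableSet B')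
    (hd : Disjoint B B') :
    interaction μ k A (B ∪ B') = interaction μ k A B + interaction μ k A B' := by
  rw [interaction_comm hk, interaction_union_left hB' hd, interaction_comm hk B,
    interaction_comm hk B']

lemma interaction_eq_inter_add_sdiff (hk : IsSymmKernel k) (hB : MeasurableSet B)
    (hΩ : MeasurableSet Ω) :
    interaction μ k A B = interaction μ k A (B ∩ Ω) + interaction μ k A (B \ Ω) := by
  rw [← interaction_union_right hk (hB.diff hΩ) (disjoint_sdiff_right.mono_left inter_subset_right),
    inter_union_sdiff]

lemma nonlocalPerimeter_compl (hk : IsSymmKernel k) (hΩ : MeasurableSet Ω)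
    (hE : MeasurableSet E) : nonlocalPerimeter μ k Ω Eᶜ = nonlocalPerimeter μ k Ω E := by
  simp only [nonlocalPerimeter, compl_compl]
  rw [interaction_eq_inter_add_sdiff hk hE hΩ, interaction_eq_inter_add_sdiff hk hE.compl hΩ,
    interaction_comm hk (Eᶜ ∩ Ω) (E ∩ Ω), interaction_comm hk (Eᶜ ∩ Ω) (E \ Ω),
    interaction_comm hk (Eᶜ \ Ω) (E ∩ Ω)]
  ring

lemma nonlocalPerimeter_sdiff (hk : IsSymmKernel k) (hA : MeasurableSet A) (hE : MeasurableSet E)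
    (hΩ : MeasurableSet Ω) (hAE : A ⊆ E) (hAΩ : A ⊆ Ω) :
    nonlocalPerimeter μ k Ω (E \ A) =
      (interaction μ k ((E \ A) ∩ Ω) Eᶜ + interaction μ k (E \ Ω) (Eᶜ ∩ Ω)) +
        interaction μ k A (E \ A) := by
  have hd : Disjoint Eᶜ A := disjoint_compl_left_iff_subset.2 hAE
  have hcompl : (E \ A)ᶜ = Eᶜ ∪ A := by grind
  have hcompl_inter : (Eᶜ ∪ A) ∩ Ω = Eᶜ ∩ Ω ∪ A := by grind
  have hsdiff : (E \ A) \ Ω = E \ Ω := by grind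
  rw [nonlocalPerimeter, hcompl, hcompl_inter, hsdiff, interaction_union_right hk hA hd,
    interaction_union_right hk hA (hd.mono_left inter_subset_left),
    interaction_eq_inter_add_sdiff hk (hE.diff hA) hΩ, hsdiff,
    interaction_comm hk A ((E \ A) ∩ Ω), interaction_comm hk A (E \ Ω)]
  ring

namespace IsNonlocalMinimizer

lemma compl (hk : IsSymmKernel k) (hΩ : MeasurableSet Ω) (h : IsNonlocalMinimizer μ k Ω E) :
    IsNonlocalMinimizer μ k Ω Eᶜ where
  measurableSet := h.measurableSet.compl
  perimeter_le F hF hFE := by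
    rw [nonlocalPerimeter_compl hk hΩ h.measurableSet, ← nonlocalPerimeter_compl hk hΩ hF]
    exact h.perimeter_le Fᶜ hF.compl (by ext x; have := Set.ext_iff.1 hFE x; grind)

lemma perimeter_ne_top (hk : IsSymmKernel k) (hΩ : MeasurableSet Ω)
    (hfin : interaction μ k Ω Ωᶜ ≠ ⊤) (h : IsNonlocalMinimizer μ k Ω E) :
    nonlocalPerimeter μ k Ω E ≠ ⊤ := by
  refine ne_top_of_le_ne_top hfin ?_
  calc nonlocalPerimeter μ k Ω E
      ≤ nonlocalPerimeter μ k Ω (E \ Ω) :=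
        h.perimeter_le _ (h.measurableSet.diff hΩ) (by grind)
    _ = interaction μ k (E \ Ω) ((E \ Ω)ᶜ ∩ Ω) := by
        simp [nonlocalPerimeter, interaction]
    _ ≤ interaction μ k Ωᶜ Ω :=
        interaction_mono (fun _ hx => hx.2) inter_subset_right
    _ = interaction μ k Ω Ωᶜ := interaction_comm hk _ _

lemma interaction_compl_le (hk : IsSymmKernel k) (hΩ : MeasurableSet Ω)
    (hfin : interaction μ k Ω Ωᶜ ≠ ⊤) (h : IsNonlocalMinimizer μ k Ω E) (hA : MeasurableSet A)
    (hAE : A ⊆ E) (hAΩ : A ⊆ Ω) : interaction μ k A Eᶜ ≤ interaction μ k A (E \ A) := by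
  have hle := h.perimeter_le (E \ A) (h.measurableSet.diff hA) (by grind)
  have htop := h.perimeter_ne_top hk hΩ hfin
  rw [nonlocalPerimeter_eq_add hA hAE hAΩ] at hle htop
  rw [nonlocalPerimeter_sdiff hk hA h.measurableSet hΩ hAE hAΩ] at hle
  exact (ENNReal.add_le_add_iff_left (ENNReal.add_ne_top.1 htop).1).1 hle

lemma interaction_self_compl_le (hk : IsSymmKernel k) (hΩ : MeasurableSet Ω)
    (hfin : interaction μ k Ω Ωᶜ ≠ ⊤) (h : IsNonlocalMinimizer μ k Ω E) (hA : MeasurableSet A)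
    (hAE : A ⊆ E) (hAΩ : A ⊆ Ω) : interaction μ k A Aᶜ ≤ 2 * interaction μ k A (E \ A) := by
  have hAc : Aᶜ = Eᶜ ∪ (E \ A) := by grind
  have hd : Disjoint Eᶜ (E \ A) := disjoint_compl_left.mono_right sdiff_subset
  rw [hAc, interaction_union_right hk (h.measurableSet.diff hA) hd, two_mul]
  gcongr
  exact h.interaction_compl_le hk hΩ hfin hA hAE hAΩ

end IsNonlocalMinimizer

end Interaction

section FractionalKernel

variable {V : Type*} [NormedAddCommGroup V] [NormedSpace ℝ V] {s : ℝ}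

/-- The fractional kernel `‖x - y‖ ^ (-(n + s))` on a normed space of dimension `n`. The
convention `1 / 0 = 0` makes it vanish, instead of being infinite, on the diagonal. -/
noncomputable def fractionalKernel (s : ℝ) (x y : V) : ENNReal :=
  ENNReal.ofReal (1 / ‖x - y‖ ^ ((finrank ℝ V : ℝ) + s))

lemma fractionalKernel_sub_right (x y z : V) :
    fractionalKernel s (x - z) (y - z) = fractionalKernel s x y := by
  simp [fractionalKernel]

lemma fractionalKernel_smul {r : ℝ} (hr : 0 < r) (x y : V) :
    fractionalKernel s (r • x) (r • y) =
      ENNReal.ofReal (r ^ (-((finrank ℝ V : ℝ) + s))) * fractionalKernel s x y := by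
  rw [fractionalKernel, fractionalKernel, ← ENNReal.ofReal_mul (by positivity), ← smul_sub,
    norm_smul, Real.norm_of_nonneg hr.le, Real.mul_rpow hr.le (norm_nonneg _),
    Real.rpow_neg hr.le, one_div, mul_inv, one_div]

lemma ofReal_le_fractionalKernel (hs : 0 ≤ s) {x y : V} (hxy : x ≠ y) {r : ℝ}
    (h : dist x y ≤ r) :
    ENNReal.ofReal (r ^ (-((finrank ℝ V : ℝ) + s))) ≤ fractionalKernel s x y := by
  rw [dist_eq_norm] at h
  have hpos : 0 < ‖x - y‖ := norm_sub_pos_iff.2 hxy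
  rw [fractionalKernel, Real.rpow_neg (hpos.le.trans h), ← one_div]
  gcongr

variable [MeasurableSpace V] [BorelSpace V]

lemma isSymmKernel_fractionalKernel [SecondCountableTopology V] :
    IsSymmKernel (fractionalKernel s : V → V → ENNReal) where
  measurable_uncurry := by unfold Function.uncurry fractionalKernel; fun_prop
  symm x y := by simp only [fractionalKernel, norm_sub_rev]

variable [FiniteDimensional ℝ V] (μ : Measure V) [μ.IsAddHaarMeasure]

/-- The interaction of a point with the complement of the unit ball around it. -/
noncomputable def fractionalTail (s : ℝ) : ENNReal :=
  ∫⁻ y in (ball (0 : V) 1)ᶜ, fractionalKernel s 0 y ∂μ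

lemma fractionalTail_ne_top (hs : 0 < s) : fractionalTail μ s ≠ ⊤ := by
  set p : ℝ := finrank ℝ V + s with hp
  have hp0 : 0 ≤ p := by positivity
  have hle : ∀ y ∈ (ball (0 : V) 1)ᶜ, fractionalKernel s 0 y ≤
      ENNReal.ofReal (2 ^ p) * ENNReal.ofReal ((1 + ‖y‖) ^ (-p)) := by
    intro y hy
    have hy1 : 1 ≤ ‖y‖ := by simpa using hy
    rw [fractionalKernel, zero_sub, norm_neg, ← ENNReal.ofReal_mul (by positivity), ← hp]
    refine ENNReal.ofReal_le_ofReal ?_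
    rw [Real.rpow_neg (by positivity), ← div_eq_mul_inv, div_le_div_iff₀ (by positivity)
      (by positivity), one_mul, ← Real.mul_rpow zero_le_two (norm_nonneg y)]
    exact Real.rpow_le_rpow (by positivity) (by linarith) hp0
  have hfin : ∫⁻ y : V, ENNReal.ofReal ((1 + ‖y‖) ^ (-p)) ∂μ < ⊤ :=
    finite_integral_one_add_norm (by simp [hp, hs])
  refine ne_top_of_le_ne_top (ENNReal.mul_ne_top (ENNReal.ofReal_ne_top (r := 2 ^ p)) hfin.ne) ?_
  rw [← lintegral_const_mul _ (by fun_prop)]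
  exact (setLIntegral_mono' measurableSet_ball.compl hle).trans (setLIntegral_le_lintegral _ _)

lemma lintegral_eq_lintegral_comp_smul {r : ℝ} (hr : 0 < r) {f : V → ENNReal}
    (hf : Measurable f) :
    ∫⁻ y, f y ∂μ = ENNReal.ofReal (r ^ finrank ℝ V) * ∫⁻ y, f (r • y) ∂μ := by
  rw [← lintegral_map hf (measurable_const_smul r), Measure.map_addHaar_smul μ hr.ne',
    lintegral_smul_measure, abs_of_pos (by positivity), smul_eq_mul, ← mul_assoc,
    ← ENNReal.ofReal_mul (by positivity), mul_inv_cancel₀ (by positivity), ENNReal.ofReal_one,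
    one_mul]

lemma lintegral_compl_ball_fractionalKernel (x : V) {r : ℝ} (hr : 0 < r) :
    ∫⁻ y in (ball x r)ᶜ, fractionalKernel s x y ∂μ =
      ENNReal.ofReal (r ^ (-s)) * fractionalTail μ s := by
  have hmeas : ∀ r, Measurable ((ball (0 : V) r)ᶜ.indicator (fractionalKernel s 0)) := fun _ =>
    isSymmKernel_fractionalKernel.measurable_uncurry.of_uncurry_left.indicator
      measurableSet_ball.compl
  have htranslate : ∀ y, (ball x r)ᶜ.indicator (fractionalKernel s x) y =
      (ball (0 : V) r)ᶜ.indicator (fractionalKernel s 0) (y - x) := by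
    intro y
    have := fractionalKernel_sub_right (s := s) x y x
    simp_all [indicator, dist_eq_norm]
  have hscale : ∀ y, (ball (0 : V) r)ᶜ.indicator (fractionalKernel s 0) (r • y) =
      ENNReal.ofReal (r ^ (-((finrank ℝ V : ℝ) + s))) *
        (ball (0 : V) 1)ᶜ.indicator (fractionalKernel s 0) y := by
    intro y
    have := fractionalKernel_smul (s := s) hr 0 y
    simp_all [indicator, norm_smul, abs_of_pos]
  rw [← lintegral_indicator measurableSet_ball.compl, lintegral_congr htranslate,
    lintegral_sub_right_eq_self, lintegral_eq_lintegral_comp_smul μ hr (hmeas r),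
    lintegral_congr hscale, lintegral_const_mul _ (hmeas 1),
    lintegral_indicator measurableSet_ball.compl, ← mul_assoc,
    ← ENNReal.ofReal_mul (by positivity), ← Real.rpow_natCast, ← Real.rpow_add hr, fractionalTail]
  ring_nf

lemma interaction_compl_ball_le {A : Set V} {x₀ : V} {r : ℝ} (hA : MeasurableSet A)
    (hAr : A ⊆ ball x₀ r) :
    interaction μ (fractionalKernel s) A (ball x₀ r)ᶜ ≤
      ∫⁻ x in A, ENNReal.ofReal ((r - dist x x₀) ^ (-s)) * fractionalTail μ s ∂μ := by
  refine setLIntegral_mono' hA fun x hx => ?_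
  rw [← lintegral_compl_ball_fractionalKernel μ x (sub_pos.2 (hAr hx))]
  exact lintegral_mono_set (compl_subset_compl.2 (ball_subset_ball' (by linarith)))

end FractionalKernel

section DeGiorgi

lemma le_mul_pow_of_rpow_le {v : ℕ → ℝ} {α N q : ℝ} (hα0 : 0 < α) (hα1 : α ≤ 1) (hN : 0 ≤ N)
    (hq : 0 < q) (hv : ∀ k, 0 ≤ v k)
    (hstep : ∀ k, v (k + 1) ^ α ≤ N * (q ^ (α - 1)) ^ k * v k)
    (hsmall : N * v 0 ^ (1 - α) ≤ q ^ α) (k : ℕ) : v k ≤ v 0 * q ^ k := by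
  have h1α : 0 ≤ 1 - α := sub_nonneg.2 hα1
  induction k with
  | zero => simp
  | succ k ih =>
    have hq_cancel : (q ^ (α - 1)) ^ k * (q ^ k) ^ (1 - α) = 1 := by
      rw [Real.rpow_pow_comm hq.le, ← Real.rpow_add (by positivity)]
      simp
    have hpow : v (k + 1) ^ α ≤ (q * v k) ^ α := by
      calc v (k + 1) ^ α
          ≤ N * (q ^ (α - 1)) ^ k * v k := hstep k
        _ = N * (q ^ (α - 1)) ^ k * v k ^ (1 - α) * v k ^ α := by
          rw [mul_assoc _ (v k ^ (1 - α)), ← Real.rpow_add_of_nonneg (hv k) h1α hα0.le]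
          simp
        _ ≤ N * (q ^ (α - 1)) ^ k * (v 0 * q ^ k) ^ (1 - α) * v k ^ α := by
          have := hv k
          gcongr
        _ = N * v 0 ^ (1 - α) * v k ^ α := by
          rw [Real.mul_rpow (hv 0) (by positivity)]
          linear_combination N * v 0 ^ (1 - α) * v k ^ α * hq_cancel
        _ ≤ q ^ α * v k ^ α := by
          have := Real.rpow_nonneg (hv k) α
          gcongr
        _ = (q * v k) ^ α := (Real.mul_rpow hq.le (hv k)).symm
    calc v (k + 1)
        ≤ q * v k := (Real.rpow_le_rpow_iff (hv _) (mul_nonneg hq.le (hv k)) hα0).1 hpow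
      _ ≤ q * (v 0 * q ^ k) := by gcongr
      _ = v 0 * q ^ (k + 1) := by ring

lemma rpow_dyadic_le {V : ℝ → ℝ} {α M r₀ : ℝ} (hr₀ : 0 < r₀)
    (hstep : ∀ r R, 0 < r → r < R → R ≤ r₀ → V r ^ α * (R - r) ≤ M * V R) (k : ℕ) :
    V (r₀ * (1 / 2 + (1 / 2) ^ (k + 2))) ^ α ≤
      4 * M / r₀ * 2 ^ k * V (r₀ * (1 / 2 + (1 / 2) ^ (k + 1))) := by
  set r : ℝ := r₀ * (1 / 2 + (1 / 2) ^ (k + 2)) with hr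
  set R : ℝ := r₀ * (1 / 2 + (1 / 2) ^ (k + 1)) with hR
  have hgap : R - r = r₀ / (4 * 2 ^ k) := by
    simp only [hr, hR, one_div, inv_pow, pow_succ]
    field_simp
    ring
  have hgap_pos : 0 < r₀ / (4 * 2 ^ k) := by positivity
  have hRr₀ : R ≤ r₀ := by
    have : (1 / 2 : ℝ) ^ (k + 1) ≤ 1 / 2 := pow_le_of_le_one (by norm_num) (by norm_num) (by simp)
    exact mul_le_of_le_one_right hr₀.le (by linarith)
  have h := hstep r R (by positivity) (by linarith) hRr₀
  rw [hgap, ← le_div_iff₀ hgap_pos] at h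
  refine h.trans_eq ?_
  field_simp

-- The values at the radii `r₀ (1 / 2 + 2⁻ᵏ / 2)` decay geometrically.
lemma half_nonpos_of_rpow_mul_sub_le {V : ℝ → ℝ} {α M r₀ : ℝ} (hα0 : 0 < α) (hα1 : α < 1)
    (hM : 0 ≤ M) (hr₀ : 0 < r₀) (hmono : Monotone V) (hV : ∀ r, 0 ≤ V r)
    (hstep : ∀ r R, 0 < r → r < R → R ≤ r₀ → V r ^ α * (R - r) ≤ M * V R)
    (hsmall : 4 * M / r₀ * V r₀ ^ (1 - α) ≤ (2 ^ (-(1 / (1 - α)))) ^ α) : V (r₀ / 2) ≤ 0 := by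
  have h1α : 0 < 1 - α := sub_pos.2 hα1
  set q : ℝ := 2 ^ (-(1 / (1 - α))) with hq
  set ρ : ℕ → ℝ := fun k => r₀ * (1 / 2 + (1 / 2) ^ (k + 1)) with hρ
  have hq0 : 0 < q := by positivity
  have hq1 : q < 1 :=
    Real.rpow_lt_one_of_one_lt_of_neg one_lt_two (neg_neg_of_pos (by positivity))
  have hq2 : q ^ (α - 1) = 2 := by
    rw [hq, ← Real.rpow_mul zero_le_two, show -(1 / (1 - α)) * (α - 1) = 1 by field_simp; ring,
      Real.rpow_one]
  have hρ0 : ρ 0 = r₀ := by simp only [hρ]; ring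
  have hρ_half : ∀ k, r₀ / 2 ≤ ρ k := fun k => by
    have : 0 < r₀ * (1 / 2) ^ (k + 1) := by positivity
    simp only [hρ]
    linarith
  have hiter : ∀ k, V (ρ (k + 1)) ^ α ≤ 4 * M / r₀ * (q ^ (α - 1)) ^ k * V (ρ k) := by
    rw [hq2]
    exact rpow_dyadic_le hr₀ hstep
  have hdecay : ∀ k, V (ρ k) ≤ V (ρ 0) * q ^ k :=
    le_mul_pow_of_rpow_le hα0 hα1.le (by positivity) hq0 (fun k => hV (ρ k)) hiter
      (hρ0.symm ▸ hsmall)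
  have hlim : Tendsto (fun k : ℕ => V (ρ 0) * q ^ k) atTop (nhds 0) := by
    simpa using (tendsto_pow_atTop_nhds_zero_of_lt_one hq0.le hq1).const_mul (V (ρ 0))
  exact ge_of_tendsto' hlim fun k => (hmono (hρ_half k)).trans (hdecay k)

lemma rpow_mul_rpow_le_of_rpow_mul_sub_le {V : ℝ → ℝ} {n s M r₀ : ℝ} (hs0 : 0 < s) (hs1 : s ≤ 1)
    (hsn : s < n) (hM : 0 < M) (hr₀ : 0 < r₀) (hmono : Monotone V) (hV : ∀ r, 0 ≤ V r)
    (hpos : 0 < V (r₀ / 2))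
    (hstep : ∀ r R, 0 < r → r < R → R ≤ r₀ →
      V r ^ (1 - s / n) * (R - r) ≤ M * R ^ (1 - s) * V R) :
    (M * 2 ^ (1 + n / s))⁻¹ ^ (n / s) * r₀ ^ n ≤ V r₀ := by
  have hn0 : 0 < n := hs0.trans hsn
  by_contra! hlt
  have hthreshold : V r₀ ^ (s / n) ≤ (M * 2 ^ (1 + n / s))⁻¹ * r₀ ^ s := by
    have hpow : ((M * 2 ^ (1 + n / s))⁻¹ ^ (n / s) * r₀ ^ n) ^ (s / n) =
        (M * 2 ^ (1 + n / s))⁻¹ * r₀ ^ s := by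
      rw [Real.mul_rpow (by positivity) (by positivity), ← Real.rpow_mul (by positivity),
        ← Real.rpow_mul hr₀.le, div_mul_div_cancel₀ hs0.ne', div_self hn0.ne', Real.rpow_one,
        mul_div_cancel₀ _ hn0.ne']
    exact hpow ▸ Real.rpow_le_rpow (hV r₀) hlt.le (by positivity)
  have hstep' : ∀ r R, 0 < r → r < R → R ≤ r₀ →
      V r ^ (1 - s / n) * (R - r) ≤ M * r₀ ^ (1 - s) * V R := fun r R hr hrR hRr => by
    have hR : 0 ≤ R := hr.le.trans hrR.le
    have := hV R
    have := sub_nonneg.2 hs1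
    exact (hstep r R hr hrR hRr).trans (by gcongr)
  have hsmall : 4 * (M * r₀ ^ (1 - s)) / r₀ * V r₀ ^ (1 - (1 - s / n)) ≤
      (2 ^ (-(1 / (1 - (1 - s / n))))) ^ (1 - s / n) := by
    have hexp : -(1 / (1 - (1 - s / n))) * (1 - s / n) = 2 - (1 + n / s) := by
      rw [sub_sub_cancel]
      field_simp
      ring
    rw [← Real.rpow_mul zero_le_two, hexp, sub_sub_cancel]
    calc 4 * (M * r₀ ^ (1 - s)) / r₀ * V r₀ ^ (s / n)
        ≤ 4 * (M * r₀ ^ (1 - s)) / r₀ * ((M * 2 ^ (1 + n / s))⁻¹ * r₀ ^ s) := by gcongr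
      _ = 2 ^ (2 - (1 + n / s)) := by
        rw [Real.rpow_sub hr₀, Real.rpow_one, Real.rpow_sub two_pos, Real.rpow_two]
        field_simp
        norm_num
  exact hpos.not_ge (half_nonpos_of_rpow_mul_sub_le (sub_pos.2 ((div_lt_one hn0).2 hsn))
    (sub_lt_self 1 (by positivity)) (by positivity) hr₀ hmono hV hstep' hsmall)

end DeGiorgi

section Isoperimetric

lemma rpow_neg_mul_mul_self {n s w m : ℝ} (hn : n ≠ 0) (hw : 0 < w) (hm : 0 < m) :
    ((2 * m / w) ^ n⁻¹) ^ (-(n + s)) * m * m = (w / 2) ^ (1 + s / n) * m ^ (1 - s / n) := by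
  have hrpow : ((2 * m / w) ^ n⁻¹) ^ (-(n + s)) = (w / 2) ^ (1 + s / n) * m ^ (-(1 + s / n)) := by
    rw [← Real.rpow_mul (by positivity), show n⁻¹ * -(n + s) = -(1 + s / n) by field_simp,
      mul_div_right_comm, Real.mul_rpow (by positivity) hm.le,
      Real.rpow_neg (by positivity : (0 : ℝ) ≤ 2 / w), ← Real.inv_rpow (by positivity), inv_div]
  rw [hrpow, mul_assoc, mul_assoc, ← mul_assoc (m ^ _), ← Real.rpow_add_one hm.ne',
    ← Real.rpow_add_one hm.ne']
  ring_nf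

variable {V : Type*} [NormedAddCommGroup V] [NormedSpace ℝ V] [FiniteDimensional ℝ V]
  [MeasurableSpace V] [BorelSpace V] (μ : Measure V) [μ.IsAddHaarMeasure] {s : ℝ}

lemma measure_ball_rpow_inv_finrank [Nontrivial V] {m : ℝ} (hm : 0 ≤ m) (x : V) :
    μ (ball x ((m / μ.real (ball 0 1)) ^ (finrank ℝ V : ℝ)⁻¹)) = ENNReal.ofReal m := by
  have hw : 0 < μ.real (ball (0 : V) 1) :=
    ENNReal.toReal_pos (measure_ball_pos μ 0 one_pos).ne' measure_ball_lt_top.ne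
  rw [Measure.addHaar_ball μ x (by positivity), Real.rpow_inv_natCast_pow (by positivity)
    Module.finrank_pos.ne', ← ofReal_measureReal measure_ball_lt_top.ne,
    ← ENNReal.ofReal_mul (by positivity), div_mul_cancel₀ _ hw.ne']

lemma ofReal_rpow_mul_measure_sub_le [Nontrivial V] (hs : 0 ≤ s) {A : Set V}
    (hA : MeasurableSet A) (x : V) (r : ℝ) :
    ENNReal.ofReal (r ^ (-((finrank ℝ V : ℝ) + s))) * (μ (ball x r) - μ A) ≤
      ∫⁻ y in Aᶜ, fractionalKernel s x y ∂μ := by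
  have hmeas : MeasurableSet ((ball x r \ A) \ {x}) :=
    (measurableSet_ball.diff hA).diff (measurableSet_singleton x)
  calc ENNReal.ofReal (r ^ (-((finrank ℝ V : ℝ) + s))) * (μ (ball x r) - μ A)
      ≤ ENNReal.ofReal (r ^ (-((finrank ℝ V : ℝ) + s))) * μ ((ball x r \ A) \ {x}) := by
        rw [measure_sdiff_null (measure_singleton x)]
        gcongr
        exact le_measure_sdiff
    _ = ∫⁻ _ in (ball x r \ A) \ {x}, ENNReal.ofReal (r ^ (-((finrank ℝ V : ℝ) + s))) ∂μ :=
        (setLIntegral_const _ _).symm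
    _ ≤ ∫⁻ y in (ball x r \ A) \ {x}, fractionalKernel s x y ∂μ :=
        setLIntegral_mono' hmeas fun _ hy =>
          ofReal_le_fractionalKernel hs (Ne.symm hy.2) (mem_ball'.1 hy.1.1).le
    _ ≤ ∫⁻ y in Aᶜ, fractionalKernel s x y ∂μ := lintegral_mono_set fun _ hy => hy.1.2

-- For every `x`, a ball around `x` of measure `2 μ(A)` contains at least `μ(A)` of `Aᶜ`.
theorem fractional_isoperimetric (hs0 : 0 ≤ s) (hsn : s < finrank ℝ V) {A : Set V}
    (hA : MeasurableSet A) (hAfin : μ A ≠ ⊤) :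
    ENNReal.ofReal ((μ.real (ball (0 : V) 1) / 2) ^ (1 + s / finrank ℝ V) *
        μ.real A ^ (1 - s / finrank ℝ V)) ≤
      interaction μ (fractionalKernel s) A Aᶜ := by
  set n : ℝ := (finrank ℝ V : ℝ)
  set w : ℝ := μ.real (ball (0 : V) 1)
  set m : ℝ := μ.real A
  have hn0 : 0 < n := hs0.trans_lt hsn
  have : Nontrivial V := Module.finrank_pos_iff.1 (Nat.cast_pos.1 hn0)
  have hα : 0 < 1 - s / n := sub_pos.2 ((div_lt_one hn0).2 hsn)
  have hw0 : 0 < w :=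
    ENNReal.toReal_pos (measure_ball_pos μ 0 one_pos).ne' measure_ball_lt_top.ne
  obtain hm0 | hm0 : m = 0 ∨ 0 < m := measureReal_nonneg.eq_or_lt'
  · simp [hm0, Real.zero_rpow hα.ne']
  set r : ℝ := (2 * m / w) ^ n⁻¹
  have hAm : μ A = ENNReal.ofReal m := (ofReal_measureReal hAfin).symm
  have hball : ∀ x, μ (ball x r) - μ A = ENNReal.ofReal m := fun x => by
    rw [measure_ball_rpow_inv_finrank μ (by positivity) x, hAm, ← ENNReal.ofReal_sub _ hm0.le]
    ring_nf
  calc ENNReal.ofReal ((w / 2) ^ (1 + s / n) * m ^ (1 - s / n))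
      = ∫⁻ _ in A, ENNReal.ofReal (r ^ (-(n + s))) * ENNReal.ofReal m ∂μ := by
        rw [setLIntegral_const, hAm, ← ENNReal.ofReal_mul (by positivity),
          ← ENNReal.ofReal_mul (by positivity), rpow_neg_mul_mul_self hn0.ne' hw0 hm0]
    _ ≤ interaction μ (fractionalKernel s) A Aᶜ := lintegral_mono fun x =>
        hball x ▸ ofReal_rpow_mul_measure_sub_le μ hs0 hA x r

end Isoperimetric

section RadialIntegrals

variable {V : Type*} [NormedAddCommGroup V] [NormedSpace ℝ V] [FiniteDimensional ℝ V]
  [MeasurableSpace V] [BorelSpace V] (μ : Measure V) [μ.IsAddHaarMeasure] {s : ℝ}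

lemma lintegral_Ioo_rpow_sub (hs : s < 1) {a b : ℝ} (hab : a ≤ b) :
    ∫⁻ ρ in Ioo a b, ENNReal.ofReal ((ρ - a) ^ (-s)) =
      ENNReal.ofReal ((b - a) ^ (1 - s) / (1 - s)) := by
  have hexp : -1 < -s := neg_lt_neg hs
  have hint : IntegrableOn (fun ρ => (ρ - a) ^ (-s)) (Ioo a b) := by
    rw [← intervalIntegrable_iff_integrableOn_Ioo_of_le hab]
    simpa using (intervalIntegral.intervalIntegrable_rpow' hexp).comp_sub_right
      (a := 0) (b := b - a) a
  rw [← ofReal_integral_eq_lintegral_ofReal hint, ← integral_Ioc_eq_integral_Ioo,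
    ← intervalIntegral.integral_of_le hab,
    intervalIntegral.integral_comp_sub_right (fun u : ℝ => u ^ (-s)),
    integral_rpow (Or.inl hexp), sub_self, neg_add_eq_sub, Real.zero_rpow (by linarith), sub_zero]
  exact (ae_restrict_mem measurableSet_Ioo).mono fun ρ hρ =>
    Real.rpow_nonneg (sub_nonneg.2 hρ.1.le) _

lemma lintegral_Ioo_indicator_rpow_sub_le (hs : s < 1) {a b : ℝ} (ha : 0 ≤ a) (hab : a ≤ b) :
    ∫⁻ ρ in Ioo 0 b, (Ioi a).indicator (fun ρ => ENNReal.ofReal ((ρ - a) ^ (-s))) ρ ≤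
      ENNReal.ofReal (b ^ (1 - s) / (1 - s)) := by
  have : 0 < 1 - s := sub_pos.2 hs
  rw [setLIntegral_indicator measurableSet_Ioi, inter_comm, Ioo_inter_Ioi, max_eq_right ha,
    lintegral_Ioo_rpow_sub hs hab]
  have := sub_nonneg.2 hab
  gcongr
  exact sub_le_self b ha

lemma integrableOn_ball_rpow_sub_norm [Nontrivial V] (hs : s < 1) (r : ℝ) :
    IntegrableOn (fun x : V => (r - ‖x‖) ^ (-s)) (ball 0 r) μ := by
  obtain hr | hr := le_total r 0
  · simp [ball_eq_empty.2 hr]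
  rw [integrableOn_fun_norm_addHaar μ (f := fun t : ℝ => (r - t) ^ (-s))]
  have hint : IntegrableOn (fun t : ℝ => (r - t) ^ (-s)) (Ioo 0 r) := by
    rw [← intervalIntegrable_iff_integrableOn_Ioo_of_le hr]
    simpa using ((intervalIntegral.intervalIntegrable_rpow' (neg_lt_neg hs)).comp_sub_left
      (a := 0) (b := r) r).symm
  refine Integrable.bdd_mul (c := r ^ (finrank ℝ V - 1)) hint (by fun_prop) ?_
  filter_upwards [ae_restrict_mem measurableSet_Ioo] with t ht
  rw [norm_pow, Real.norm_of_nonneg ht.1.le]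
  exact pow_le_pow_left₀ ht.1.le ht.2.le _

lemma lintegral_ball_rpow_sub_dist_ne_top [Nontrivial V] (hs : s < 1) (x₀ : V) (r : ℝ) :
    ∫⁻ x in ball x₀ r, ENNReal.ofReal ((r - dist x x₀) ^ (-s)) ∂μ ≠ ⊤ := by
  have hball : ball x₀ r = (· - x₀) ⁻¹' ball 0 r := by ext; simp [dist_eq_norm]
  simp only [hball, dist_eq_norm]
  rw [(measurePreserving_sub_right μ x₀).setLIntegral_comp_preimage measurableSet_ball
    (f := fun x => ENNReal.ofReal ((r - ‖x‖) ^ (-s))) (by fun_prop)]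
  exact (integrableOn_ball_rpow_sub_norm μ hs r).lintegral_lt_top.ne

lemma interaction_ball_compl_ball_ne_top [Nontrivial V] (hs : s ∈ Ioo 0 1) (x₀ : V) (r : ℝ) :
    interaction μ (fractionalKernel s) (ball x₀ r) (ball x₀ r)ᶜ ≠ ⊤ := by
  refine ne_top_of_le_ne_top ?_ (interaction_compl_ball_le μ measurableSet_ball subset_rfl)
  rw [lintegral_mul_const _ (by fun_prop)]
  exact ENNReal.mul_ne_top (lintegral_ball_rpow_sub_dist_ne_top μ hs.2 x₀ r)
    (fractionalTail_ne_top μ hs.1)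

lemma lintegral_interaction_ball_inter_le (hs : s < 1) {E : Set V} (hE : MeasurableSet E) (x₀ : V)
    (R : ℝ) :
    ∫⁻ ρ in Ioo 0 R, interaction μ (fractionalKernel s) (ball x₀ ρ ∩ E) (ball x₀ ρ)ᶜ ≤
      ENNReal.ofReal (R ^ (1 - s) / (1 - s)) * fractionalTail μ s * μ (ball x₀ R ∩ E) := by
  set g : ℝ → V → ENNReal := fun ρ x =>
    (Ioi (dist x x₀)).indicator (fun ρ => ENNReal.ofReal ((ρ - dist x x₀) ^ (-s))) ρ with hg
  have hgm : Measurable (Function.uncurry g) :=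
    Measurable.indicator (s := {p : ℝ × V | dist p.2 x₀ < p.1})
      (f := fun p => ENNReal.ofReal ((p.1 - dist p.2 x₀) ^ (-s))) (by fun_prop)
      (measurableSet_lt (by fun_prop) (by fun_prop))
  have hball : ∀ ρ ∈ Ioo 0 R,
      interaction μ (fractionalKernel s) (ball x₀ ρ ∩ E) (ball x₀ ρ)ᶜ ≤
        ∫⁻ x in ball x₀ R ∩ E, g ρ x * fractionalTail μ s ∂μ := by
    intro ρ hρ
    have hmeas : MeasurableSet (ball x₀ ρ ∩ E) := measurableSet_ball.inter hE
    have hsub : ball x₀ ρ ∩ E ⊆ ball x₀ R ∩ E :=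
      inter_subset_inter_left E (ball_subset_ball hρ.2.le)
    refine (interaction_compl_ball_le μ hmeas inter_subset_left).trans
      (le_trans ?_ (lintegral_mono_set hsub))
    refine setLIntegral_mono' hmeas fun x hx => ?_
    simp only [hg, indicator_of_mem (mem_Ioi.2 (mem_ball.1 hx.1)), le_rfl]
  calc ∫⁻ ρ in Ioo 0 R, interaction μ (fractionalKernel s) (ball x₀ ρ ∩ E) (ball x₀ ρ)ᶜ
      ≤ ∫⁻ ρ in Ioo 0 R, ∫⁻ x in ball x₀ R ∩ E, g ρ x * fractionalTail μ s ∂μ :=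
        setLIntegral_mono' measurableSet_Ioo hball
    _ = ∫⁻ x in ball x₀ R ∩ E, (∫⁻ ρ in Ioo 0 R, g ρ x) * fractionalTail μ s ∂μ := by
        rw [lintegral_lintegral_swap (hgm.mul_const _).aemeasurable]
        exact lintegral_congr fun x => lintegral_mul_const _ hgm.of_uncurry_right
    _ ≤ ∫⁻ _ in ball x₀ R ∩ E,
          ENNReal.ofReal (R ^ (1 - s) / (1 - s)) * fractionalTail μ s ∂μ :=
        setLIntegral_mono' (measurableSet_ball.inter hE) fun x hx => by
          gcongr
          exact lintegral_Ioo_indicator_rpow_sub_le hs dist_nonneg (mem_ball.1 hx.1).le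
    _ = ENNReal.ofReal (R ^ (1 - s) / (1 - s)) * fractionalTail μ s * μ (ball x₀ R ∩ E) :=
        setLIntegral_const _ _

end RadialIntegrals

section DensityEstimate

variable {V : Type*} [NormedAddCommGroup V] [NormedSpace ℝ V] [FiniteDimensional ℝ V]
  [Nontrivial V] {s : ℝ}

lemma lt_finrank_of_lt_one (hs : s < 1) : s < finrank ℝ V :=
  hs.trans_le (Nat.one_le_cast.2 Module.finrank_pos)

variable [MeasurableSpace V] [BorelSpace V] (μ : Measure V) [μ.IsAddHaarMeasure]

namespace IsNonlocalMinimizer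

variable {Ω E : Set V}

lemma ofReal_rpow_measureReal_le_interaction (hs : s ∈ Ioo 0 1) (hΩ : MeasurableSet Ω)
    (hfin : interaction μ (fractionalKernel s) Ω Ωᶜ ≠ ⊤)
    (h : IsNonlocalMinimizer μ (fractionalKernel s) Ω E) {x : V} {ρ : ℝ} (hx : ball x ρ ⊆ Ω) :
    ENNReal.ofReal ((μ.real (ball (0 : V) 1) / 2) ^ (1 + s / finrank ℝ V) *
        μ.real (ball x ρ ∩ E) ^ (1 - s / finrank ℝ V)) ≤
      2 * interaction μ (fractionalKernel s) (ball x ρ ∩ E) (ball x ρ)ᶜ := by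
  have hA : MeasurableSet (ball x ρ ∩ E) := measurableSet_ball.inter h.measurableSet
  have hsub : E \ (ball x ρ ∩ E) ⊆ (ball x ρ)ᶜ := fun y hy hyρ => hy.2 ⟨hyρ, hy.1⟩
  calc _ ≤ interaction μ (fractionalKernel s) (ball x ρ ∩ E) (ball x ρ ∩ E)ᶜ :=
        fractional_isoperimetric μ hs.1.le (lt_finrank_of_lt_one hs.2) hA
          (measure_ne_top_of_subset inter_subset_left measure_ball_lt_top.ne)
    _ ≤ 2 * interaction μ (fractionalKernel s) (ball x ρ ∩ E) (E \ (ball x ρ ∩ E)) :=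
        h.interaction_self_compl_le isSymmKernel_fractionalKernel hΩ hfin hA inter_subset_right
          (inter_subset_left.trans hx)
    _ ≤ 2 * interaction μ (fractionalKernel s) (ball x ρ ∩ E) (ball x ρ)ᶜ := by
        gcongr
        exact interaction_mono subset_rfl hsub

lemma ofReal_rpow_measureReal_mul_sub_le (hs : s ∈ Ioo 0 1) (hΩ : MeasurableSet Ω)
    (hfin : interaction μ (fractionalKernel s) Ω Ωᶜ ≠ ⊤)
    (h : IsNonlocalMinimizer μ (fractionalKernel s) Ω E) {x : V} {r R : ℝ} (hr : 0 ≤ r)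
    (hx : ball x R ⊆ Ω) :
    ENNReal.ofReal ((μ.real (ball (0 : V) 1) / 2) ^ (1 + s / finrank ℝ V) *
        μ.real (ball x r ∩ E) ^ (1 - s / finrank ℝ V)) * ENNReal.ofReal (R - r) ≤
      2 * (ENNReal.ofReal (R ^ (1 - s) / (1 - s)) * fractionalTail μ s * μ (ball x R ∩ E)) := by
  have hα : 0 ≤ 1 - s / finrank ℝ V :=
    sub_nonneg.2 (div_le_one_of_le₀ (lt_finrank_of_lt_one hs.2).le (Nat.cast_nonneg _))
  calc _ = ∫⁻ _ in Ioo r R, ENNReal.ofReal ((μ.real (ball (0 : V) 1) / 2) ^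
          (1 + s / finrank ℝ V) * μ.real (ball x r ∩ E) ^ (1 - s / finrank ℝ V)) := by
        rw [setLIntegral_const, Real.volume_Ioo]
    _ ≤ ∫⁻ ρ in Ioo r R, 2 * interaction μ (fractionalKernel s) (ball x ρ ∩ E) (ball x ρ)ᶜ := by
        refine setLIntegral_mono' measurableSet_Ioo fun ρ hρ => ?_
        refine le_trans ?_ (h.ofReal_rpow_measureReal_le_interaction μ hs hΩ hfin
          ((ball_subset_ball hρ.2.le).trans hx))
        have hmono : μ.real (ball x r ∩ E) ≤ μ.real (ball x ρ ∩ E) :=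
          measureReal_mono (inter_subset_inter_left E (ball_subset_ball hρ.1.le))
            (measure_ne_top_of_subset inter_subset_left measure_ball_lt_top.ne)
        gcongr
    _ ≤ ∫⁻ ρ in Ioo 0 R, 2 * interaction μ (fractionalKernel s) (ball x ρ ∩ E) (ball x ρ)ᶜ :=
        lintegral_mono_set (Ioo_subset_Ioo_left hr)
    _ ≤ _ := by
        rw [lintegral_const_mul' _ _ ENNReal.ofNat_ne_top]
        gcongr
        exact lintegral_interaction_ball_inter_le μ hs.2 h.measurableSet x R

end IsNonlocalMinimizer

lemma exists_rpow_measureReal_mul_sub_le (hs : s ∈ Ioo 0 1) :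
    ∃ M > 0, ∀ Ω E : Set V, MeasurableSet Ω → interaction μ (fractionalKernel s) Ω Ωᶜ ≠ ⊤ →
      IsNonlocalMinimizer μ (fractionalKernel s) Ω E → ∀ x r R, 0 ≤ r → r ≤ R → ball x R ⊆ Ω →
        μ.real (ball x r ∩ E) ^ (1 - s / finrank ℝ V) * (R - r) ≤
          M * R ^ (1 - s) * μ.real (ball x R ∩ E) := by
  set c : ℝ := (μ.real (ball (0 : V) 1) / 2) ^ (1 + s / finrank ℝ V)
  set T : ℝ := (fractionalTail μ s).toReal
  have hw : 0 < μ.real (ball (0 : V) 1) :=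
    ENNReal.toReal_pos (measure_ball_pos μ 0 one_pos).ne' measure_ball_lt_top.ne
  have hc0 : 0 < c := by positivity
  have h1s : 0 < 1 - s := sub_pos.2 hs.2
  refine ⟨2 * T / (1 - s) / c + 1, by positivity, fun Ω E hΩ hfin h x r R hr hrR hx => ?_⟩
  have hR : 0 ≤ R := hr.trans hrR
  have hgrowth := h.ofReal_rpow_measureReal_mul_sub_le μ hs hΩ hfin hr hx
  have hgrowth_real : c * μ.real (ball x r ∩ E) ^ (1 - s / finrank ℝ V) * (R - r) ≤
      2 * (R ^ (1 - s) / (1 - s) * T * μ.real (ball x R ∩ E)) := by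
    rw [← ENNReal.ofReal_mul (by positivity),
      ← ENNReal.ofReal_toReal (fractionalTail_ne_top μ hs.1),
      ← ofReal_measureReal (measure_ne_top_of_subset inter_subset_left measure_ball_lt_top.ne),
      ← ENNReal.ofReal_mul (by positivity), ← ENNReal.ofReal_mul (by positivity),
      ← ENNReal.ofReal_ofNat, ← ENNReal.ofReal_mul (by positivity)] at hgrowth
    exact (ENNReal.ofReal_le_ofReal_iff (by positivity)).1 hgrowth
  have hslack : 0 ≤ R ^ (1 - s) * μ.real (ball x R ∩ E) := by positivity
  calc μ.real (ball x r ∩ E) ^ (1 - s / finrank ℝ V) * (R - r)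
      ≤ 2 * (R ^ (1 - s) / (1 - s) * T * μ.real (ball x R ∩ E)) / c := by
        rw [le_div_iff₀ hc0]
        linarith
    _ = 2 * T / (1 - s) / c * (R ^ (1 - s) * μ.real (ball x R ∩ E)) := by ring
    _ ≤ _ := by linarith

theorem exists_ofReal_mul_pow_le_measure_ball_inter (hs : s ∈ Ioo 0 1) :
    ∃ c > 0, ∀ Ω E : Set V, MeasurableSet Ω → interaction μ (fractionalKernel s) Ω Ωᶜ ≠ ⊤ →
      IsNonlocalMinimizer μ (fractionalKernel s) Ω E → ∀ x ∈ (μ.restrict E).support, ∀ r > 0,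
        ball x r ⊆ Ω → ENNReal.ofReal (c * r ^ finrank ℝ V) ≤ μ (ball x r ∩ E) := by
  obtain ⟨M, hM, hgrowth⟩ := exists_rpow_measureReal_mul_sub_le μ hs
  refine ⟨(M * 2 ^ (1 + (finrank ℝ V : ℝ) / s))⁻¹ ^ ((finrank ℝ V : ℝ) / s), by positivity,
    fun Ω E hΩ hfin h x hxE r hr hx => ?_⟩
  have hne_top : ∀ ρ, μ (ball x ρ ∩ E) ≠ ⊤ := fun _ =>
    measure_ne_top_of_subset inter_subset_left measure_ball_lt_top.ne
  have hpos : 0 < μ.real (ball x (r / 2) ∩ E) := by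
    have := nhds_basis_ball.mem_measureSupport.1 hxE _ (half_pos hr)
    rw [Measure.restrict_apply measurableSet_ball] at this
    exact ENNReal.toReal_pos this.ne' (hne_top _)
  have hmono : Monotone fun ρ => μ.real (ball x ρ ∩ E) := fun _ ρ hρ =>
    measureReal_mono (inter_subset_inter_left E (ball_subset_ball hρ)) (hne_top ρ)
  rw [← Real.rpow_natCast]
  exact ENNReal.ofReal_le_of_le_toReal <| rpow_mul_rpow_le_of_rpow_mul_sub_le hs.1 hs.2.le
    (lt_finrank_of_lt_one hs.2) hM hr hmono (fun _ => measureReal_nonneg) hpos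
    fun ρ R hρ hρR hRr => hgrowth Ω E hΩ hfin h x ρ R hρ.le hρR.le ((ball_subset_ball hRr).trans hx)

end DensityEstimate

lemma measure_inter_pos_of_measure_inter_symmDiff_lt {X : Type*} [MeasurableSpace X]
    {μ : Measure X} {E F U : Set X} (h : μ (U ∩ symmDiff E F) < μ (U ∩ E)) : 0 < μ (U ∩ F) := by
  refine pos_iff_ne_zero.2 fun hF => h.not_ge ?_
  calc μ (U ∩ E) ≤ μ ((U ∩ symmDiff E F) ∪ (U ∩ F)) :=
        measure_mono fun x hx => by by_cases x ∈ F <;> simp_all [mem_symmDiff]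
    _ ≤ μ (U ∩ symmDiff E F) + μ (U ∩ F) := measure_union_le _ _
    _ = μ (U ∩ symmDiff E F) := by rw [hF, add_zero]

lemma setIntegral_abs_indicator_sub_indicator {X : Type*} [MeasurableSpace X] {μ : Measure X}
    {A B K : Set X} (hA : MeasurableSet A) (hB : MeasurableSet B) :
    ∫ x in K, |A.indicator (fun _ => (1 : ℝ)) x - B.indicator (fun _ => (1 : ℝ)) x| ∂μ =
      μ.real (K ∩ symmDiff A B) := by
  have hAB : MeasurableSet (symmDiff A B) := hA.symmDiff hB
  calc ∫ x in K, |A.indicator (fun _ => (1 : ℝ)) x - B.indicator (fun _ => (1 : ℝ)) x| ∂μ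
      = ∫ x in K, (symmDiff A B).indicator 1 x ∂μ := by
        congr with x
        rw [← abs_indicator_symmDiff, abs_of_nonneg (indicator_nonneg (fun _ _ => zero_le_one) x)]
        rfl
    _ = μ.real (K ∩ symmDiff A B) := by
        rw [integral_indicator_one hAB, measureReal_restrict_apply hAB, inter_comm]

section EssentialBoundary

variable {X : Type*} [TopologicalSpace X] [MeasurableSpace X] {μ : Measure X} {E U : Set X}

/-- The points all of whose neighbourhoods meet both `E` and its complement in positive measure,
i.e. the topological boundary of `E` after normalizing it by a null set. -/
def essBoundary (μ : Measure X) (E : Set X) : Set X :=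
  (μ.restrict E).support ∩ (μ.restrict Eᶜ).support

lemma support_restrict_union_support_restrict_compl [μ.IsOpenPosMeasure] (E : Set X) :
    (μ.restrict E).support ∪ (μ.restrict Eᶜ).support = univ := by
  rw [← Measure.support_add, ← univ_subset_iff, ← μ.support_eq_univ]
  exact Measure.support_mono (by simpa using Measure.restrict_union_le (μ := μ) E Eᶜ)

lemma inter_essBoundary_nonempty [OpensMeasurableSpace X] [HereditarilyLindelofSpace X]
    [μ.IsOpenPosMeasure] (hU : IsOpen U) (hUc : IsPreconnected U) (hE : 0 < μ (U ∩ E))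
    (hEc : 0 < μ (U ∩ Eᶜ)) : (U ∩ essBoundary μ E).Nonempty := by
  have hmeet : ∀ F, 0 < μ (U ∩ F) → (U ∩ (μ.restrict F).support).Nonempty := fun F hF =>
    Measure.nonempty_inter_support_of_pos (by rwa [Measure.restrict_apply hU.measurableSet])
  refine isPreconnected_closed_iff.1 hUc _ _ Measure.isClosed_support Measure.isClosed_support ?_
    (hmeet E hE) (hmeet Eᶜ hEc)
  rw [support_restrict_union_support_restrict_compl]
  exact subset_univ U

end EssentialBoundary

theorem boundary_convergence_general {V : Type*} [NormedAddCommGroup V] [NormedSpace ℝ V]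
    [FiniteDimensional ℝ V] [Nontrivial V] [MeasurableSpace V] [BorelSpace V] (μ : Measure V)
    [μ.IsAddHaarMeasure] {s : ℝ} (hs : s ∈ Ioo 0 1) {Ω : Set V} (hΩ : MeasurableSet Ω)
    (hfin : interaction μ (fractionalKernel s) Ω Ωᶜ ≠ ⊤) {ι : Type*} {l : Filter ι}
    {F : ι → Set V} {E : Set V} (hF : ∀ k, IsNonlocalMinimizer μ (fractionalKernel s) Ω (F k))
    (hconv : Tendsto (fun k => μ (Ω ∩ symmDiff (F k) E)) l (nhds 0)) {r ε : ℝ} (hr : 0 < r)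
    (hε : 0 < ε) :
    ∀ᶠ k in l, ∀ x ∈ essBoundary μ (F k), ball x r ⊆ Ω → ∃ y ∈ essBoundary μ E, dist x y < ε := by
  obtain ⟨c, hc, hdensity⟩ := exists_ofReal_mul_pow_le_measure_ball_inter μ hs
  set ρ : ℝ := min ε r
  have hρ0 : 0 < ρ := lt_min hε hr
  have hδ : 0 < ENNReal.ofReal (c * ρ ^ finrank ℝ V) := ENNReal.ofReal_pos.2 (by positivity)
  filter_upwards [hconv.eventually_lt_const hδ] with k hk x hx hxΩ
  have hball : ball x ρ ⊆ Ω := (ball_subset_ball (min_le_right _ _)).trans hxΩ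
  have hclose : μ (ball x ρ ∩ symmDiff (F k) E) < ENNReal.ofReal (c * ρ ^ finrank ℝ V) :=
    (measure_mono (inter_subset_inter_left _ hball)).trans_lt hk
  have hE : 0 < μ (ball x ρ ∩ E) := measure_inter_pos_of_measure_inter_symmDiff_lt
    (hclose.trans_le (hdensity Ω _ hΩ hfin (hF k) x hx.1 ρ hρ0 hball))
  have hEc : 0 < μ (ball x ρ ∩ Eᶜ) := measure_inter_pos_of_measure_inter_symmDiff_lt <| by
    rw [compl_symmDiff_compl]
    exact hclose.trans_le (hdensity Ω _ hΩ hfin ((hF k).compl isSymmKernel_fractionalKernel hΩ)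
      x hx.2 ρ hρ0 hball)
  obtain ⟨y, hyρ, hyE⟩ :=
    inter_essBoundary_nonempty isOpen_ball (convex_ball x ρ).isPreconnected hE hEc
  exact ⟨y, hyE, (mem_ball'.1 hyρ).trans_le (min_le_left _ _)⟩

section EuclideanSpace

variable {n : ℕ} {s : ℝ} {E : Set (EuclideanSpace ℝ (Fin n))}

lemma mtBoundary_eq_essBoundary (E : Set (EuclideanSpace ℝ (Fin n))) :
    mtBoundary n E = essBoundary volume E := by
  ext x
  simp only [mtBoundary, essBoundary, mem_ofPred_eq, mem_inter_iff,
    nhds_basis_ball.mem_measureSupport, Measure.restrict_apply measurableSet_ball, sdiff_eq,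
    ← forall_and]

lemma IsMinimizerB1.isNonlocalMinimizer (h : IsMinimizerB1 n s E) :
    IsNonlocalMinimizer volume (fractionalKernel s) (ball 0 1) E where
  measurableSet := h.1
  perimeter_le := by
    simpa only [Jfun, interactionL, nonlocalPerimeter, interaction, fractionalKernel,
      finrank_euclideanSpace_fin] using h.2

lemma L1locIndicatorTendsto.tendsto_volume_inter_symmDiff
    {A : ℕ → Set (EuclideanSpace ℝ (Fin n))} (h : L1locIndicatorTendsto n A E)
    (hA : ∀ k, MeasurableSet (A k)) (hE : MeasurableSet E) {U : Set (EuclideanSpace ℝ (Fin n))}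
    (hU : Bornology.IsBounded U) :
    Tendsto (fun k => volume (U ∩ symmDiff (A k) E)) atTop (nhds 0) := by
  have hK : IsCompact (closure U) := hU.isCompact_closure
  have hlim : Tendsto (fun k => volume (closure U ∩ symmDiff (A k) E)) atTop (nhds 0) := by
    simpa [setIntegral_abs_indicator_sub_indicator (hA _) hE, ofReal_measureReal,
      measure_ne_top_of_subset inter_subset_left hK.measure_lt_top.ne]
      using ENNReal.tendsto_ofReal (h (closure U) hK)
  exact tendsto_of_tendsto_of_tendsto_of_le_of_le tendsto_const_nhds hlim (fun _ => zero_le)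
    fun _ => measure_mono (inter_subset_inter_left _ subset_closure)

end EuclideanSpace

/-- Hausdorff convergence of boundaries: if minimizers `E_k → E` in `L¹_loc`, then for every
`ε > 0`, eventually every point of `∂E_k ∩ B_{1/2}` is within `ε` of `∂E`. -/
theorem boundary_convergence (n : ℕ) (hn : 1 ≤ n) (s : ℝ) (hs : s ∈ Set.Ioo (0:ℝ) 1)
    (Ek : ℕ → Set (EuclideanSpace ℝ (Fin n))) (E : Set (EuclideanSpace ℝ (Fin n)))
    (hE : MeasurableSet E)
    (hmin : ∀ k, IsMinimizerB1 n s (Ek k))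
    (hconv : L1locIndicatorTendsto n Ek E) :
    ∀ ε : ℝ, 0 < ε → ∃ K : ℕ, ∀ k ≥ K,
      ∀ x ∈ mtBoundary n (Ek k) ∩ ball (0 : EuclideanSpace ℝ (Fin n)) (1/2),
        ∃ y ∈ mtBoundary n E, dist x y ≤ ε := by
  intro ε hε
  have : Nonempty (Fin n) := Fin.pos_iff_nonempty.1 hn
  obtain ⟨K, hK⟩ := eventually_atTop.1 <| boundary_convergence_general volume hs measurableSet_ball
    (interaction_ball_compl_ball_ne_top volume hs 0 1) (fun k => (hmin k).isNonlocalMinimizer)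
    (hconv.tendsto_volume_inter_symmDiff (fun k => (hmin k).1) hE isBounded_ball) one_half_pos hε
  refine ⟨K, fun k hk x ⟨hx, hx0⟩ => ?_⟩
  rw [mtBoundary_eq_essBoundary] at hx ⊢
  have hball : ball x (1 / 2) ⊆ ball 0 1 := ball_subset_ball' (by linarith [mem_ball.1 hx0])
  obtain ⟨y, hy, hxy⟩ := hK k hk x hx hball
  exact ⟨y, hy, hxy.le⟩
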